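/- Let k be a field and Q a connected finite acyclic non-Dynkin quiver. Then the graded dimensions of the quiver Heisenberg algebra ᵛΛ(Q) do not depend on the parameter: for any v, w ∈ k^{Q_0}, every n ≥ 0, and all vertices i, j ∈ Q_0, one has dim_k e_i (ᵛΛ(Q)_n) e_j = dim_k e_i (ʷΛ(Q)_n) e_j. In particular the formula for the Hilbert series of ᵛΛ(Q) valid for sincere v (i.e., v with all v_i ≠ 0) extends to arbitrary v ∈ k^{Q_0}. -/

import Mathlib

/-!
STATEMENT 6: Hilbert series of the quiver Heisenberg algebra
`ᵛΛ(Q) = k[z]Q̄ / (ρ_i - v_i z e_i)` of a connected finite acyclic non-Dynkin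
quiver: the graded pieces are finite dimensional and
`h_{ᵛΛ}(t) · (1 - C t + t²) · (1 - t²) = 1` over `k[[t]]`.

The algebra is presented as the quotient of the free algebra on generators
`e_i` (trivial paths, degree 0), `α`, `α*` (arrows of the double quiver,
degree 1) and a central variable `z` (degree 2) by the path-algebra
relations, the relations making `z` central, and the relations
`ρ_i = v_i z e_i`.
-/

/-- A finite quiver. -/
structure FinQuiver where
  r : ℕ
  Arrow : Type
  [instFintypeArrow : Fintype Arrow]
  src : Arrow → Fin r
  tgt : Arrow → Fin r

attribute [instance] FinQuiver.instFintypeArrow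

namespace FinQuiver

variable (Q : FinQuiver)

/-- The underlying graph of `Q` is connected. -/
def Connected : Prop :=
  ∀ i j : Fin Q.r, Relation.ReflTransGen
    (fun a b => ∃ e : Q.Arrow, (Q.src e = a ∧ Q.tgt e = b) ∨ (Q.src e = b ∧ Q.tgt e = a)) i j

/-- `Q` has no oriented cycles. -/
def Acyclic : Prop :=
  ∀ i : Fin Q.r, ¬ Relation.TransGen (fun a b => ∃ e : Q.Arrow, Q.src e = a ∧ Q.tgt e = b) i i

/-- The Tits quadratic form of `Q` on `ℝ^{Q₀}`. -/
def titsForm (x : Fin Q.r → ℝ) : ℝ :=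
  (∑ i, x i ^ 2) - ∑ e : Q.Arrow, x (Q.src e) * x (Q.tgt e)

/-- `Q` is Dynkin iff its Tits form is positive definite. -/
def IsDynkin : Prop := ∀ x : Fin Q.r → ℝ, x ≠ 0 → 0 < Q.titsForm x

/-- Adjacency matrix of `Q`. -/
def adjMatrix : Matrix (Fin Q.r) (Fin Q.r) ℕ := Matrix.of fun i j =>
  Fintype.card {e : Q.Arrow // Q.src e = i ∧ Q.tgt e = j}

/-- Adjacency matrix `C` of the double quiver `Q̄`. -/
def doubleAdj : Matrix (Fin Q.r) (Fin Q.r) ℕ := Matrix.of fun i j =>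
  Q.adjMatrix i j + Q.adjMatrix j i

end FinQuiver

/-- Generators for `k[z]Q̄`: trivial paths, arrows of the double quiver, and
the central variable `z`. -/
inductive QHGen (Q : FinQuiver) : Type
  | vert : Fin Q.r → QHGen Q
  | fwd : Q.Arrow → QHGen Q
  | bwd : Q.Arrow → QHGen Q
  | z : QHGen Q

/-- The mesh element `ρ_i = ∑_{src α = i} α α* - ∑_{tgt α = i} α* α`. -/
noncomputable def qhMesh (k : Type) [Field k] (Q : FinQuiver) (i : Fin Q.r) :
    FreeAlgebra k (QHGen Q) :=
  (∑ e : Q.Arrow, if Q.src e = i then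
      FreeAlgebra.ι k (QHGen.fwd e) * FreeAlgebra.ι k (QHGen.bwd e) else 0)
  - ∑ e : Q.Arrow, if Q.tgt e = i then
      FreeAlgebra.ι k (QHGen.bwd e) * FreeAlgebra.ι k (QHGen.fwd e) else 0

/-- Defining relations of the quiver Heisenberg algebra `ᵛΛ(Q)`:
path-algebra relations for `Q̄`, centrality of `z`, and `ρ_i = v_i z e_i`. -/
inductive QHRel (k : Type) [Field k] (Q : FinQuiver) (v : Fin Q.r → k) :
    FreeAlgebra k (QHGen Q) → FreeAlgebra k (QHGen Q) → Prop
  | vert_idem (i : Fin Q.r) :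
      QHRel k Q v (FreeAlgebra.ι k (QHGen.vert i) * FreeAlgebra.ι k (QHGen.vert i))
        (FreeAlgebra.ι k (QHGen.vert i))
  | vert_orth (i j : Fin Q.r) (h : i ≠ j) :
      QHRel k Q v (FreeAlgebra.ι k (QHGen.vert i) * FreeAlgebra.ι k (QHGen.vert j)) 0
  | vert_sum : QHRel k Q v (∑ i : Fin Q.r, FreeAlgebra.ι k (QHGen.vert i)) 1
  | fwd_left (e : Q.Arrow) :
      QHRel k Q v (FreeAlgebra.ι k (QHGen.vert (Q.src e)) * FreeAlgebra.ι k (QHGen.fwd e))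
        (FreeAlgebra.ι k (QHGen.fwd e))
  | fwd_right (e : Q.Arrow) :
      QHRel k Q v (FreeAlgebra.ι k (QHGen.fwd e) * FreeAlgebra.ι k (QHGen.vert (Q.tgt e)))
        (FreeAlgebra.ι k (QHGen.fwd e))
  | bwd_left (e : Q.Arrow) :
      QHRel k Q v (FreeAlgebra.ι k (QHGen.vert (Q.tgt e)) * FreeAlgebra.ι k (QHGen.bwd e))
        (FreeAlgebra.ι k (QHGen.bwd e))
  | bwd_right (e : Q.Arrow) :
      QHRel k Q v (FreeAlgebra.ι k (QHGen.bwd e) * FreeAlgebra.ι k (QHGen.vert (Q.src e)))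
        (FreeAlgebra.ι k (QHGen.bwd e))
  | central (g : QHGen Q) :
      QHRel k Q v (FreeAlgebra.ι k QHGen.z * FreeAlgebra.ι k g)
        (FreeAlgebra.ι k g * FreeAlgebra.ι k QHGen.z)
  | heisenberg (i : Fin Q.r) :
      QHRel k Q v (qhMesh k Q i)
        (v i • (FreeAlgebra.ι k QHGen.z * FreeAlgebra.ι k (QHGen.vert i)))

/-- The quiver Heisenberg algebra `ᵛΛ(Q)`. -/
abbrev QHAlg (k : Type) [Field k] (Q : FinQuiver) (v : Fin Q.r → k) : Type :=
  RingQuot (QHRel k Q v)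

/-- Image in `ᵛΛ(Q)` of a generator. -/
noncomputable def qhGen (k : Type) [Field k] (Q : FinQuiver) (v : Fin Q.r → k)
    (g : QHGen Q) : QHAlg k Q v :=
  RingQuot.mkAlgHom k (QHRel k Q v) (FreeAlgebra.ι k g)

/-- Degree of a generator: trivial paths 0, arrows 1, `z` 2. -/
def qhWt (Q : FinQuiver) : QHGen Q → ℕ
  | .vert _ => 0
  | .fwd _ => 1
  | .bwd _ => 1
  | .z => 2

/-- The degree-`n` component `ᵛΛ(Q)_n`: span of images of weight-`n` monomials. -/
noncomputable def qhPiece (k : Type) [Field k] (Q : FinQuiver) (v : Fin Q.r → k)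
    (n : ℕ) : Submodule k (QHAlg k Q v) :=
  Submodule.span k
    {x | ∃ l : List (QHGen Q), (l.map (qhWt Q)).sum = n ∧ x = (l.map (qhGen k Q v)).prod}

/-- The subspace `e_i ᵛΛ(Q)_n e_j`. -/
noncomputable def qhCorner (k : Type) [Field k] (Q : FinQuiver) (v : Fin Q.r → k)
    (n : ℕ) (i j : Fin Q.r) : Submodule k (QHAlg k Q v) :=
  (qhPiece k Q v n).map
    ((LinearMap.mulLeft k (qhGen k Q v (QHGen.vert i))).comp
      (LinearMap.mulRight k (qhGen k Q v (QHGen.vert j))))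

/-- The matrix Hilbert series `h_{ᵛΛ}(t)` over `k[[t]]`. -/
noncomputable def qhHilb (k : Type) [Field k] (Q : FinQuiver) (v : Fin Q.r → k) :
    Matrix (Fin Q.r) (Fin Q.r) (PowerSeries k) :=
  Matrix.of fun i j => PowerSeries.mk fun n => (Module.finrank k (qhCorner k Q v n i j) : k)

namespace FinQuiver

variable (Q : FinQuiver)

/-- The arrows of the double quiver: `inl e` is the arrow `e`, `inr e` is its reverse. -/
abbrev DArrow : Type := Q.Arrow ⊕ Q.Arrow

variable {Q}

/-- Source of an arrow of the double quiver. -/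
def dsrc : Q.DArrow → Fin Q.r := Sum.elim Q.src Q.tgt

/-- Target of an arrow of the double quiver. -/
def dtgt : Q.DArrow → Fin Q.r := Sum.elim Q.tgt Q.src

/-- The sign with which `a a*` enters the mesh relation. -/
def dsign (k : Type) [Field k] : Q.DArrow → k := Sum.elim (fun _ => 1) (fun _ => -1)

lemma dsrc_swap (a : Q.DArrow) : dsrc a.swap = dtgt a := by cases a <;> rfl

lemma dtgt_swap (a : Q.DArrow) : dtgt a.swap = dsrc a := by cases a <;> rfl

lemma dsign_mul_self (k : Type) [Field k] (a : Q.DArrow) : dsign k a * dsign k a = 1 := by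
  cases a <;> simp [dsign]

lemma two_mul_titsForm (D c : Fin Q.r → ℝ) :
    2 * Q.titsForm (fun i => D i * c i) =
      (∑ i, c i ^ 2 * D i * (2 * D i - ∑ a : Q.DArrow, if dsrc a = i then D (dtgt a) else 0)) +
        ∑ e, D (Q.src e) * D (Q.tgt e) * (c (Q.src e) - c (Q.tgt e)) ^ 2 := by
  have key : ∑ i, c i ^ 2 * D i * (∑ a : Q.DArrow, if dsrc a = i then D (dtgt a) else 0) =
      ∑ a : Q.DArrow, c (dsrc a) ^ 2 * D (dsrc a) * D (dtgt a) := by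
    simp_rw [Finset.mul_sum]
    rw [Finset.sum_comm]
    refine Finset.sum_congr rfl fun a _ => ?_
    simp
  simp_rw [mul_sub]
  rw [Finset.sum_sub_distrib, key, Fintype.sum_sum_type]
  simp only [dsrc, dtgt, Sum.elim_inl, Sum.elim_inr, titsForm, Finset.mul_sum, mul_sub]
  rw [sub_add, ← Finset.sum_add_distrib, ← Finset.sum_sub_distrib]
  congr 1
  · exact Finset.sum_congr rfl fun i _ => by ring
  · exact Finset.sum_congr rfl fun i _ => by ring

/-- A nonnegative superharmonic function on a connected graph that is strictly superharmonic
at a vertex where it is positive forces the Tits form to be positive definite. -/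
lemma isDynkin_of_superharmonic (hconn : Q.Connected) (D : Fin Q.r → ℝ) (h0 : ∀ i, 0 ≤ D i)
    (hD : ∀ i, (∑ a : Q.DArrow, if dsrc a = i then D (dtgt a) else 0) ≤ 2 * D i)
    (j : Fin Q.r) (hj0 : 0 < D j)
    (hj : (∑ a : Q.DArrow, if dsrc a = j then D (dtgt a) else 0) < 2 * D j) : Q.IsDynkin := by
  have hnb : ∀ a : Q.DArrow, 0 < D (dtgt a) → 0 < D (dsrc a) := by
    intro a ha
    have h1 := Finset.single_le_sum
      (f := fun b : Q.DArrow => if dsrc b = dsrc a then D (dtgt b) else 0)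
      (fun b _ => by split_ifs <;> simp [h0]) (Finset.mem_univ a)
    simp only [if_true] at h1
    linarith [hD (dsrc a)]
  have hpos : ∀ i, 0 < D i := by
    intro i
    induction hconn j i with
    | refl => exact hj0
    | tail _ hbc ih =>
      obtain ⟨e, ⟨rfl, rfl⟩ | ⟨rfl, rfl⟩⟩ := hbc
      · exact hnb (Sum.inr e) ih
      · exact hnb (Sum.inl e) ih
  intro x hx
  by_contra hq
  have hxc : x = fun i => D i * (x i / D i) := by
    ext i
    field_simp [(hpos i).ne']
  set c : Fin Q.r → ℝ := fun i => x i / D i with hc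
  have hid := two_mul_titsForm (Q := Q) D c
  rw [← hxc] at hid
  have n1 : ∀ i ∈ Finset.univ, 0 ≤ c i ^ 2 * D i *
      (2 * D i - ∑ a : Q.DArrow, if dsrc a = i then D (dtgt a) else 0) := fun i _ =>
    mul_nonneg (mul_nonneg (sq_nonneg _) (h0 i)) (sub_nonneg.2 (hD i))
  have n2 : ∀ e ∈ Finset.univ, 0 ≤ D (Q.src e) * D (Q.tgt e) * (c (Q.src e) - c (Q.tgt e)) ^ 2 :=
    fun e _ => mul_nonneg (mul_nonneg (h0 _) (h0 _)) (sq_nonneg _)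
  have s1 := Finset.sum_nonneg n1
  have s2 := Finset.sum_nonneg n2
  have z1 := (Finset.sum_eq_zero_iff_of_nonneg n1).1 (by linarith) j (Finset.mem_univ _)
  have z2 := (Finset.sum_eq_zero_iff_of_nonneg n2).1 (by linarith)
  have hcj : c j = 0 := by
    have : D j * (2 * D j - ∑ a : Q.DArrow, if dsrc a = j then D (dtgt a) else 0) ≠ 0 :=
      mul_ne_zero hj0.ne' (sub_pos.2 hj).ne'
    rw [mul_assoc] at z1
    simpa using (mul_eq_zero.1 z1).resolve_right this
  have hce : ∀ e, c (Q.src e) = c (Q.tgt e) := by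
    intro e
    have h1 := (mul_eq_zero.1 (z2 e (Finset.mem_univ _))).resolve_left
      (mul_ne_zero (hpos _).ne' (hpos _).ne')
    exact sub_eq_zero.1 (pow_eq_zero_iff two_ne_zero |>.1 h1)
  have hc0 : ∀ i, c i = 0 := by
    intro i
    induction hconn j i with
    | refl => exact hcj
    | tail _ hbc ih =>
      obtain ⟨e, ⟨rfl, rfl⟩ | ⟨rfl, rfl⟩⟩ := hbc
      · rw [← hce e, ih]
      · rw [hce e, ih]
  refine hx (funext fun i => ?_)
  exact (div_eq_zero_iff.1 (hc0 i)).resolve_right (hpos i).ne'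

/-- If the dimension recursion of the preprojective algebra reaches zero, the quiver is
Dynkin. -/
lemma isDynkin_of_recursion (hconn : Q.Connected) (d : ℕ → Fin Q.r → ℕ) (n : ℕ) (j : Fin Q.r)
    (h0 : d 0 = 0) (h1 : 0 < d 1 j) (hn : d (n + 1) = 0)
    (hrec : ∀ m < n, ∀ i, d (m + 2) i + d m i =
      ∑ a : Q.DArrow, if dsrc a = i then d (m + 1) (dtgt a) else 0) : Q.IsDynkin := by
  obtain _ | n := n
  · simp [hn] at h1
  have hs : ∀ N ≤ n + 1, ∀ i,
      (∑ a : Q.DArrow, if dsrc a = i then ∑ m ∈ Finset.range N, d (m + 1) (dtgt a) else 0) +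
        d 1 i + d N i = 2 * (∑ m ∈ Finset.range N, d (m + 1) i) + d (N + 1) i := by
    intro N
    induction N with
    | zero => intro _ i; simp [h0]
    | succ N ih =>
      intro hN i
      have e1 := ih (by omega) i
      have e2 : d (N + 1 + 1) i + d N i = _ := hrec N (by omega) i
      have e3 : (∑ a : Q.DArrow, if dsrc a = i then
          ∑ m ∈ Finset.range (N + 1), d (m + 1) (dtgt a) else 0) =
          (∑ a : Q.DArrow, if dsrc a = i then ∑ m ∈ Finset.range N, d (m + 1) (dtgt a) else 0) +
          ∑ a : Q.DArrow, if dsrc a = i then d (N + 1) (dtgt a) else 0 := by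
        rw [← Finset.sum_add_distrib]
        refine Finset.sum_congr rfl fun a _ => ?_
        split_ifs <;> simp [Finset.sum_range_succ]
      rw [e3, Finset.sum_range_succ]
      omega
  obtain ⟨D, hD⟩ : ∃ D : Fin Q.r → ℕ, ∀ i, D i = ∑ m ∈ Finset.range (n + 1), d (m + 1) i :=
    ⟨_, fun _ => rfl⟩
  have hs' := hs (n + 1) le_rfl
  simp only [hn, Pi.zero_apply, add_zero, ← hD] at hs'
  have hDj : 0 < D j := by
    have := Finset.single_le_sum (f := fun m => d (m + 1) j) (fun _ _ => Nat.zero_le _)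
      (Finset.mem_range.2 (Nat.succ_pos n))
    exact hD j ▸ lt_of_lt_of_le h1 this
  refine isDynkin_of_superharmonic hconn (fun i => (D i : ℝ)) (fun i => Nat.cast_nonneg _)
    (fun i => ?_) j (by exact_mod_cast hDj) ?_
  · have := hs' i
    exact_mod_cast (by omega : (∑ a : Q.DArrow, if dsrc a = i then D (dtgt a) else 0) ≤ 2 * D i)
  · have := hs' j
    exact_mod_cast (by omega : (∑ a : Q.DArrow, if dsrc a = j then D (dtgt a) else 0) < 2 * D j)

end FinQuiver

lemma Submodule.finrank_eq_finrank_map_mkQ_add {K M : Type*} [Field K] [AddCommGroup M]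
    [Module K M] (A Z : Submodule K M) [FiniteDimensional K A] :
    Module.finrank K A = Module.finrank K (A.map Z.mkQ) +
      Module.finrank K (A ⊓ Z : Submodule K M) := by
  have h := LinearMap.finrank_range_add_finrank_ker (Z.mkQ.domRestrict A)
  rw [LinearMap.range_domRestrict] at h
  rw [← h, LinearMap.ker_domRestrict, Submodule.ker_mkQ, ← Submodule.map_comap_subtype,
    Submodule.finrank_map_subtype_eq]

/-- A graded module over the double quiver of `Q`, generated at one vertex in degree `1`, in which
the mesh relations generate all relations. The arrows raise the degree by one. -/
structure MeshModule (k : Type) [Field k] (Q : FinQuiver) (M : Type) [AddCommGroup M]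
    [Module k M] where
  /-- Action of the trivial paths. -/
  e : Fin Q.r → M →ₗ[k] M
  /-- Action of the arrows of the double quiver. -/
  act : Q.DArrow → M →ₗ[k] M
  /-- Homogeneous components. -/
  Y : ℕ → Submodule k M
  /-- The vertex of the generator. -/
  j : Fin Q.r
  /-- The generator. -/
  gen : M
  e_e : ∀ i l x, e i (e l x) = if i = l then e l x else 0
  e_sum : ∀ x, ∑ i, e i x = x
  e_act : ∀ i a x, e i (act a x) = if i = FinQuiver.dsrc a then act a x else 0
  act_e : ∀ i a x, act a (e i x) = if i = FinQuiver.dtgt a then act a x else 0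
  mesh : ∀ x, ∑ a, FinQuiver.dsign k a • act a (act a.swap x) = 0
  e_mem : ∀ n i x, x ∈ Y n → e i x ∈ Y n
  act_mem : ∀ n a x, x ∈ Y n → act a x ∈ Y (n + 1)
  Y_zero : Y 0 = ⊥
  Y_one : Y 1 = Submodule.span k {gen}
  gen_ne : gen ≠ 0
  e_gen : e j gen = gen
  surj : ∀ n, ∀ y ∈ Y (n + 2), ∃ f : Q.DArrow → M, (∀ a, f a ∈ Y (n + 1)) ∧ y = ∑ a, act a (f a)
  exact : ∀ n, ∀ f : Q.DArrow → M, (∀ a, f a ∈ Y (n + 1)) →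
    (∀ a, e (FinQuiver.dtgt a) (f a) = f a) → ∑ a, act a (f a) = 0 →
    ∃ x ∈ Y n, ∀ a, f a = FinQuiver.dsign k a • act a.swap x

namespace MeshModule

open FinQuiver

variable {k : Type} [Field k] {Q : FinQuiver} {M : Type} [AddCommGroup M] [Module k M]
  (S : MeshModule k Q M)

/-- The homogeneous component of degree `n` at the vertex `i`. -/
def W (n : ℕ) (i : Fin Q.r) : Submodule k M := S.Y n ⊓ LinearMap.eqLocus (S.e i) LinearMap.id

/-- No nonzero element of degree `n` is annihilated by all arrows. -/
def SocleFree (n : ℕ) : Prop := ∀ x ∈ S.Y n, (∀ a, S.act a x = 0) → x = 0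

/-- The only endomorphisms of the truncation to the degrees `n` and `n + 1` are the scalars. -/
def Brick (n : ℕ) : Prop :=
  ∀ f g : M →ₗ[k] M, (∀ x ∈ S.Y n, f x ∈ S.Y n) → (∀ x ∈ S.Y (n + 1), g x ∈ S.Y (n + 1)) →
    (∀ i, ∀ x ∈ S.Y n, S.e i (f x) = f (S.e i x)) →
    (∀ i, ∀ x ∈ S.Y (n + 1), S.e i (g x) = g (S.e i x)) →
    (∀ a, ∀ x ∈ S.Y n, g (S.act a x) = S.act a (f x)) →
    ∃ c : k, (∀ x ∈ S.Y n, f x = c • x) ∧ ∀ x ∈ S.Y (n + 1), g x = c • x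

lemma brick_zero : S.Brick 0 := by
  intro f g hf hg _ _ _
  have hx : S.gen ∈ S.Y 1 := S.Y_one ▸ Submodule.mem_span_singleton_self _
  have := hg _ hx
  rw [zero_add, S.Y_one, Submodule.mem_span_singleton] at this
  obtain ⟨c, hc⟩ := this
  refine ⟨c, fun x hx => ?_, fun x hx => ?_⟩
  · rw [S.Y_zero, Submodule.mem_bot] at hx
    simp [hx]
  · rw [zero_add, S.Y_one, Submodule.mem_span_singleton] at hx
    obtain ⟨d, rfl⟩ := hx
    rw [map_smul, ← hc, smul_comm]

variable {S}

lemma Brick.succ {n : ℕ} (hB : S.Brick n) (hS : S.SocleFree n) : S.Brick (n + 1) := by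
  intro f g hf hg hef heg hfg
  have hex : ∀ x ∈ S.Y n, ∃ x' ∈ S.Y n, ∀ a, f (S.act a x) = S.act a x' := by
    intro x hx
    obtain ⟨x', hx', h⟩ := S.exact n (fun a => dsign k a • f (S.act a.swap x))
      (fun a => Submodule.smul_mem _ _ (hf _ (S.act_mem _ _ _ hx)))
      (fun a => by
        rw [map_smul, hef _ _ (S.act_mem _ _ _ hx), S.e_act, dsrc_swap, if_pos rfl])
      (by
        calc ∑ a, S.act a (dsign k a • f (S.act a.swap x))
            = ∑ a, g (dsign k a • S.act a (S.act a.swap x)) := by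
              refine Finset.sum_congr rfl fun a _ => ?_
              rw [map_smul, map_smul, hfg _ _ (S.act_mem _ _ _ hx)]
          _ = 0 := by rw [← map_sum, S.mesh, map_zero])
    refine ⟨x', hx', fun a => ?_⟩
    have := congrArg (dsign k a.swap • ·) (h a.swap)
    simpa [smul_smul, dsign_mul_self] using this
  set D : M →ₗ[k] (Q.DArrow → M) := LinearMap.pi S.act with hD
  obtain ⟨G, hG⟩ := LinearMap.exists_leftInverse_of_injective (D ∘ₗ (S.Y n).subtype) (by
    rw [LinearMap.ker_eq_bot']
    intro x hx
    exact Subtype.ext (hS x x.2 fun a => congrFun hx a))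
  set h : M →ₗ[k] M := (S.Y n).subtype ∘ₗ G ∘ₗ (LinearMap.compLeft f Q.DArrow) ∘ₗ D with hh
  have hmem : ∀ x, h x ∈ S.Y n := fun x => Subtype.prop _
  have hact : ∀ x ∈ S.Y n, ∀ a, S.act a (h x) = f (S.act a x) := by
    intro x hx a
    obtain ⟨x', hx', hx''⟩ := hex x hx
    have e1 : LinearMap.compLeft f Q.DArrow (D x) = D x' := funext hx''
    have e2 : h x = x' := by
      have := LinearMap.congr_fun hG ⟨x', hx'⟩
      simp only [hh, LinearMap.comp_apply, e1]
      exact congrArg Subtype.val this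
    rw [e2, hx'']
  obtain ⟨c, hc1, hc2⟩ := hB h f (fun x _ => hmem x) hf (fun i x hx => by
    rw [← sub_eq_zero]
    refine hS _ (Submodule.sub_mem _ (S.e_mem _ _ _ (hmem x)) (hmem _)) fun a => ?_
    rw [map_sub, hact _ (S.e_mem _ _ _ hx), S.act_e, S.act_e]
    split_ifs <;> simp [hact x hx]) hef (fun a x hx => (hact x hx a).symm)
  refine ⟨c, hc2, fun y hy => ?_⟩
  obtain ⟨t, ht, rfl⟩ := S.surj n y hy
  rw [map_sum, Finset.smul_sum]
  refine Finset.sum_congr rfl fun a _ => ?_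
  rw [hfg _ _ (ht a), hc2 _ (ht a), map_smul]

lemma Brick.socleFree {n : ℕ} (hB : S.Brick n) (hY : S.Y (n + 1) ≠ ⊥) : S.SocleFree n := by
  intro x hx hax
  by_contra hx0
  obtain ⟨i, hi⟩ : ∃ i, S.e i x ≠ 0 := by
    by_contra! h
    exact hx0 (by rw [← S.e_sum x]; exact Finset.sum_eq_zero fun i _ => h i)
  obtain ⟨φ, hφ⟩ := Module.Projective.exists_dual_ne_zero k hi
  have hmem := S.e_mem n i x hx
  obtain ⟨c, hc1, hc2⟩ := hB ((φ ∘ₗ S.e i).smulRight (S.e i x)) 0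
    (fun y _ => Submodule.smul_mem _ _ hmem) (fun y _ => by simp)
    (fun l y _ => by
      simp only [LinearMap.smulRight_apply, LinearMap.comp_apply, map_smul, S.e_e]
      by_cases h : l = i
      · subst h; simp
      · simp [h, Ne.symm h])
    (by simp)
    (fun a y _ => by
      simp only [LinearMap.smulRight_apply, LinearMap.zero_apply, map_smul, S.act_e, hax]
      simp)
  refine hY ((Submodule.eq_bot_iff _).2 fun y hy => ?_)
  have h1 := hc1 _ hmem
  simp only [LinearMap.smulRight_apply, LinearMap.comp_apply, S.e_e, if_true] at h1
  have hcne : c ≠ 0 := by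
    rintro rfl
    rw [zero_smul] at h1
    exact (smul_ne_zero hφ hi) h1
  exact (smul_eq_zero.1 (hc2 y hy).symm).resolve_left hcne

variable (S)

lemma finite_Y (n : ℕ) : Module.Finite k (S.Y n) := by
  obtain _ | n := n
  · rw [S.Y_zero]; infer_instance
  induction n with
  | zero => rw [zero_add, S.Y_one]; infer_instance
  | succ n ih =>
    have hle : S.Y (n + 2) ≤ ⨆ a, (S.Y (n + 1)).map (S.act a) := by
      intro y hy
      obtain ⟨f, hf, rfl⟩ := S.surj n y hy
      exact Submodule.sum_mem _ fun a _ =>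
        Submodule.mem_iSup_of_mem a (Submodule.mem_map_of_mem (hf a))
    exact Submodule.finiteDimensional_of_le hle

lemma finite_W (n : ℕ) (i : Fin Q.r) : Module.Finite k (S.W n i) :=
  have := S.finite_Y n
  Submodule.finiteDimensional_of_le (inf_le_left : S.W n i ≤ S.Y n)

lemma finrank_W_zero (i : Fin Q.r) : Module.finrank k (S.W 0 i) = 0 := by
  have : S.W 0 i = ⊥ := by rw [W, S.Y_zero, bot_inf_eq]
  rw [this, finrank_bot]

lemma finrank_W_one (i : Fin Q.r) : Module.finrank k (S.W 1 i) = if i = S.j then 1 else 0 := by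
  split_ifs with h
  · subst h
    have : S.W 1 S.j = Submodule.span k {S.gen} := by
      rw [W, S.Y_one, inf_eq_left, Submodule.span_singleton_le_iff_mem]
      exact S.e_gen
    rw [this, finrank_span_singleton S.gen_ne]
  · have : S.W 1 i = ⊥ := by
      rw [Submodule.eq_bot_iff]
      rintro x ⟨hx, hx' : S.e i x = x⟩
      rw [S.Y_one, SetLike.mem_coe, Submodule.mem_span_singleton] at hx
      obtain ⟨c, rfl⟩ := hx
      rw [← hx', map_smul, ← S.e_gen, S.e_e, if_neg h, smul_zero]
    rw [this, finrank_bot]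

variable {S}

lemma SocleFree.finrank_add {n : ℕ} (hS : S.SocleFree n) (i : Fin Q.r) :
    Module.finrank k (S.W (n + 2) i) + Module.finrank k (S.W n i) =
      ∑ a : Q.DArrow, if dsrc a = i then Module.finrank k (S.W (n + 1) (dtgt a)) else 0 := by
  have hfin := S.finite_W
  set V : Q.DArrow → Submodule k M := fun a =>
    if dsrc a = i then S.W (n + 1) (dtgt a) else ⊥ with hV
  have hVle : ∀ a, V a ≤ S.W (n + 1) (dtgt a) := by
    intro a
    simp only [hV]
    split_ifs <;> simp
  have hV0 : ∀ a, dsrc a ≠ i → ∀ x ∈ V a, x = 0 := by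
    intro a ha x hx
    simpa [hV, ha] using hx
  have hV1 : ∀ a, dsrc a = i → V a = S.W (n + 1) (dtgt a) := fun a ha => if_pos ha
  have hVfin : ∀ a, Module.Finite k (V a) := fun a => Submodule.finiteDimensional_of_le (hVle a)
  set Φ : (∀ a, V a) →ₗ[k] M := ∑ a, S.act a ∘ₗ (V a).subtype ∘ₗ LinearMap.proj a with hΦ
  have hΦa : ∀ f, Φ f = ∑ a, S.act a (f a) := fun f => by simp [hΦ]
  have hrange : LinearMap.range Φ = S.W (n + 2) i := by
    apply le_antisymm
    · rintro _ ⟨f, rfl⟩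
      rw [hΦa]
      refine Submodule.sum_mem _ fun a _ => ?_
      by_cases ha : dsrc a = i
      · refine ⟨S.act_mem _ _ _ (hVle a (f a).2).1, ?_⟩
        change S.e i _ = _
        rw [S.e_act, if_pos ha.symm]; rfl
      · rw [hV0 a ha _ (f a).2, map_zero]
        exact Submodule.zero_mem _
    · rintro y ⟨hy, hy' : S.e i y = y⟩
      obtain ⟨f, hf, rfl⟩ := S.surj n y hy
      refine ⟨fun a => ⟨if dsrc a = i then S.e (dtgt a) (f a) else 0, ?_⟩, ?_⟩
      · by_cases ha : dsrc a = i
        · rw [hV1 a ha, if_pos ha]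
          exact ⟨S.e_mem _ _ _ (hf a), by
            change S.e _ _ = _
            rw [S.e_e, if_pos rfl]; rfl⟩
        · rw [if_neg ha]; exact Submodule.zero_mem _
      · rw [hΦa, ← hy', map_sum]
        refine Finset.sum_congr rfl fun a _ => ?_
        by_cases ha : dsrc a = i
        · simp [ha, S.e_act, S.act_e]
        · simp [ha, Ne.symm ha, S.e_act]
  set Ψ : S.W n i →ₗ[k] (∀ a, V a) := LinearMap.pi fun a =>
    LinearMap.codRestrict (V a) ((dsign k a • S.act a.swap) ∘ₗ (S.W n i).subtype) (by
      rintro ⟨x, hx, hx'⟩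
      change dsign k a • S.act a.swap x ∈ V a
      change S.e i x = x at hx'
      refine Submodule.smul_mem _ _ ?_
      by_cases ha : dsrc a = i
      · rw [hV1 a ha]
        refine ⟨S.act_mem _ _ _ hx, ?_⟩
        change S.e _ _ = _
        rw [S.e_act, dsrc_swap, if_pos rfl]; rfl
      · rw [← hx', S.act_e, dtgt_swap, if_neg (Ne.symm ha)]
        exact Submodule.zero_mem _) with hΨ
  have hΨa : ∀ x a, ((Ψ x a : V a) : M) = dsign k a • S.act a.swap x := fun x a => rfl
  have hinj : Function.Injective Ψ := by
    rw [← LinearMap.ker_eq_bot, LinearMap.ker_eq_bot']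
    intro x hx
    refine Subtype.ext (hS _ x.2.1 fun a => ?_)
    have := hΨa x a.swap
    rw [hx, Sum.swap_swap] at this
    have h2 := congrArg (dsign k a.swap • ·) this
    simpa [smul_smul, dsign_mul_self] using h2.symm
  have hker : LinearMap.ker Φ = LinearMap.range Ψ := by
    apply le_antisymm
    · intro f hf
      rw [LinearMap.mem_ker, hΦa] at hf
      obtain ⟨x, hx, hfx⟩ := S.exact n (fun a => (f a : M)) (fun a => (hVle a (f a).2).1)
        (fun a => (hVle a (f a).2).2) hf
      have hxi : S.e i x = x := by
        rw [← sub_eq_zero]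
        refine hS _ (Submodule.sub_mem _ (S.e_mem _ _ _ hx) hx) fun a => ?_
        rw [map_sub, S.act_e]
        split_ifs with h
        · exact sub_self _
        · have h1 := hfx a.swap
          rw [hV0 a.swap (by rw [dsrc_swap]; exact Ne.symm h) _ (f a.swap).2, Sum.swap_swap] at h1
          have h2 := congrArg (dsign k a.swap • ·) h1.symm
          simpa [smul_smul, dsign_mul_self] using h2
      refine ⟨⟨x, hx, hxi⟩, ?_⟩
      funext a
      exact Subtype.ext (hfx a).symm
    · rintro _ ⟨x, rfl⟩
      rw [LinearMap.mem_ker, hΦa]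
      simp only [hΨa, map_smul]
      exact S.mesh x
  rw [← hrange, ← LinearMap.finrank_range_of_inj hinj, ← hker,
    LinearMap.finrank_range_add_finrank_ker, Module.finrank_pi_fintype]
  refine Finset.sum_congr rfl fun a _ => ?_
  by_cases ha : dsrc a = i
  · rw [hV1 a ha, if_pos ha]
  · rw [show V a = ⊥ from if_neg ha, if_neg ha, finrank_bot]

variable (S)

/-- Over a connected non-Dynkin quiver no nonzero homogeneous element is annihilated by all
arrows. -/
lemma socleFree (hconn : Q.Connected) (hnd : ¬ Q.IsDynkin) (n : ℕ) : S.SocleFree n := by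
  suffices h : S.Brick n ∧ ∀ m ≤ n, S.SocleFree m from h.2 n le_rfl
  have step : ∀ n, S.Brick n → (∀ m < n, S.SocleFree m) → S.SocleFree n := by
    intro n hB hS
    refine hB.socleFree fun hY => hnd ?_
    refine FinQuiver.isDynkin_of_recursion hconn (fun m i => Module.finrank k (S.W m i)) n S.j
      (funext fun i => S.finrank_W_zero i) ?_ (funext fun i => ?_)
      (fun m hm i => (hS m hm).finrank_add i)
    · simp [S.finrank_W_one]
    · change Module.finrank k (S.W (n + 1) i) = 0
      rw [W, hY, bot_inf_eq, finrank_bot]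
  induction n with
  | zero =>
    refine ⟨S.brick_zero, fun m hm => ?_⟩
    obtain rfl : m = 0 := by omega
    exact step 0 S.brick_zero (by simp)
  | succ n ih =>
    have hB := ih.1.succ (ih.2 n le_rfl)
    refine ⟨hB, fun m hm => ?_⟩
    rcases Nat.lt_or_ge m (n + 1) with h | h
    · exact ih.2 m (by omega)
    · obtain rfl : m = n + 1 := by omega
      exact step _ hB fun l hl => ih.2 l (by omega)

end MeshModule

/-- The generator attached to an arrow of the double quiver. -/
def QHGen.arr {Q : FinQuiver} : Q.DArrow → QHGen Q := Sum.elim QHGen.fwd QHGen.bwd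

/-- The images of the generators in an algebra satisfy the relations of `ᵛΛ(Q)`. -/
structure IsQHRep {k : Type} [Field k] {Q : FinQuiver} (v : Fin Q.r → k) {B : Type} [Ring B]
    [Algebra k B] (f : QHGen Q → B) : Prop where
  vert_mul_vert : ∀ i l, f (.vert i) * f (.vert l) = if i = l then f (.vert l) else 0
  vert_sum : ∑ i, f (.vert i) = 1
  src_mul : ∀ a, f (.vert (FinQuiver.dsrc a)) * f (.arr a) = f (.arr a)
  mul_tgt : ∀ a, f (.arr a) * f (.vert (FinQuiver.dtgt a)) = f (.arr a)
  central : ∀ g, f .z * f g = f g * f .z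
  heisenberg : ∀ i, (∑ a : Q.DArrow, if FinQuiver.dsrc a = i then
    FinQuiver.dsign k a • (f (.arr a) * f (.arr a.swap)) else 0) = v i • (f .z * f (.vert i))

namespace IsQHRep

open FinQuiver

variable {k : Type} [Field k] {Q : FinQuiver} {v : Fin Q.r → k} {B : Type} [Ring B]
  [Algebra k B] {f : QHGen Q → B}

lemma vert_mul_arr (hf : IsQHRep v f) (i : Fin Q.r) (a : Q.DArrow) :
    f (.vert i) * f (.arr a) = if i = dsrc a then f (.arr a) else 0 := by
  rw [← hf.src_mul a, ← mul_assoc, hf.vert_mul_vert]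
  split_ifs <;> simp

lemma arr_mul_vert (hf : IsQHRep v f) (i : Fin Q.r) (a : Q.DArrow) :
    f (.arr a) * f (.vert i) = if i = dtgt a then f (.arr a) else 0 := by
  rw [← hf.mul_tgt a, mul_assoc, hf.vert_mul_vert]
  split_ifs <;> simp_all

lemma lift_mesh (f : QHGen Q → B) (i : Fin Q.r) :
    FreeAlgebra.lift k f (qhMesh k Q i) = ∑ a : Q.DArrow, if dsrc a = i then
      dsign k a • (f (.arr a) * f (.arr a.swap)) else 0 := by
  rw [qhMesh, Fintype.sum_sum_type, map_sub, map_sum, map_sum, sub_eq_add_neg,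
    ← Finset.sum_neg_distrib]
  congr 1 <;> refine Finset.sum_congr rfl fun e _ => ?_ <;> rw [apply_ite (FreeAlgebra.lift k f)]
  · simp [dsrc, dsign, QHGen.arr]
  · simp only [dsrc, dsign, QHGen.arr, Sum.elim_inr, Sum.swap_inr, Sum.elim_inl, map_mul,
      FreeAlgebra.lift_ι_apply, map_zero]
    by_cases h : Q.tgt e = i <;> simp [h]

/-- The homomorphism from `ᵛΛ(Q)` determined by images of the generators. -/
noncomputable def lift (hf : IsQHRep v f) : QHAlg k Q v →ₐ[k] B :=
  RingQuot.liftAlgHom k ⟨FreeAlgebra.lift k f, fun _ _ h => by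
    cases h with
    | vert_idem i => simp [hf.vert_mul_vert]
    | vert_orth i j h => simp [hf.vert_mul_vert, h]
    | vert_sum => simp [hf.vert_sum]
    | fwd_left e => simpa [dsrc, dtgt, QHGen.arr] using hf.src_mul (Sum.inl e)
    | fwd_right e => simpa [dsrc, dtgt, QHGen.arr] using hf.mul_tgt (Sum.inl e)
    | bwd_left e => simpa [dsrc, dtgt, QHGen.arr] using hf.src_mul (Sum.inr e)
    | bwd_right e => simpa [dsrc, dtgt, QHGen.arr] using hf.mul_tgt (Sum.inr e)
    | central g => simpa using hf.central g
    | heisenberg i => rw [lift_mesh, hf.heisenberg]; simp⟩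

@[simp]
lemma lift_qhGen (hf : IsQHRep v f) (g : QHGen Q) : hf.lift (qhGen k Q v g) = f g := by
  rw [lift, qhGen, RingQuot.liftAlgHom_mkAlgHom_apply, FreeAlgebra.lift_ι_apply]

lemma qhGen (k : Type) [Field k] (Q : FinQuiver) (v : Fin Q.r → k) : IsQHRep v (qhGen k Q v) := by
  have h := fun {x y} (hxy : QHRel k Q v x y) => RingQuot.mkAlgHom_rel k hxy
  refine ⟨fun i l => ?_, ?_, ?_, ?_, fun g => ?_, fun i => ?_⟩
  · split_ifs with hil
    · subst hil; simpa [_root_.qhGen] using h (.vert_idem i)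
    · simpa [_root_.qhGen] using h (.vert_orth i l hil)
  · simpa [_root_.qhGen] using h .vert_sum
  · rintro (e | e)
    · simpa [_root_.qhGen, dsrc, dtgt, QHGen.arr] using h (.fwd_left e)
    · simpa [_root_.qhGen, dsrc, dtgt, QHGen.arr] using h (.bwd_left e)
  · rintro (e | e)
    · simpa [_root_.qhGen, dsrc, dtgt, QHGen.arr] using h (.fwd_right e)
    · simpa [_root_.qhGen, dsrc, dtgt, QHGen.arr] using h (.bwd_right e)
  · simpa [_root_.qhGen] using h (.central g)
  · rw [← lift_mesh]
    have e1 : FreeAlgebra.lift k (_root_.qhGen k Q v) = RingQuot.mkAlgHom k (QHRel k Q v) := by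
      ext g; simp [_root_.qhGen]
    rw [e1, h (.heisenberg i)]
    simp [_root_.qhGen]

end IsQHRep

namespace QHAlg

open FinQuiver Polynomial

variable {k : Type} [Field k] {Q : FinQuiver} {v : Fin Q.r → k}

local notation "𝐞" i:max => qhGen k Q v (QHGen.vert i)
local notation "𝐚" a:max => qhGen k Q v (QHGen.arr a)
local notation "𝐳" => qhGen k Q v QHGen.z

lemma adjoin_range_qhGen : Algebra.adjoin k (Set.range (qhGen k Q v)) = ⊤ := by
  have : Set.range (qhGen k Q v) =
      RingQuot.mkAlgHom k (QHRel k Q v) '' Set.range (FreeAlgebra.ι k) := by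
    rw [← Set.range_comp]; rfl
  rw [this, ← AlgHom.map_adjoin, FreeAlgebra.adjoin_range_ι, Algebra.map_top,
    AlgHom.range_eq_top]
  exact RingQuot.mkAlgHom_surjective k _

lemma span_list_prod : Submodule.span k {x | ∃ l : List (QHGen Q), x = (l.map (qhGen k Q v)).prod}
    = ⊤ := by
  rw [eq_top_iff, ← Algebra.top_toSubmodule, ← adjoin_range_qhGen, Algebra.adjoin_eq_span]
  refine Submodule.span_mono fun x hx => ?_
  obtain ⟨l, hl, rfl⟩ := Submonoid.exists_list_of_mem_closure hx
  have : ∀ l : List (QHAlg k Q v), (∀ y ∈ l, y ∈ Set.range (qhGen k Q v)) →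
      ∃ l', l = List.map (qhGen k Q v) l' := by
    intro l hl
    have := (Set.mem_range (f := List.map (qhGen k Q v)) (x := l)).1
      (by rw [Set.range_list_map]; exact hl)
    obtain ⟨l', h⟩ := this
    exact ⟨l', h.symm⟩
  obtain ⟨l', rfl⟩ := this l hl
  exact ⟨l', rfl⟩

lemma z_mul_comm (x : QHAlg k Q v) : 𝐳 * x = x * 𝐳 := by
  have : x ∈ Algebra.adjoin k (Set.range (qhGen k Q v)) := by
    rw [adjoin_range_qhGen]; trivial
  induction this using Algebra.adjoin_induction with
  | mem x hx => obtain ⟨g, rfl⟩ := hx; exact (IsQHRep.qhGen k Q v).central g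
  | algebraMap r => exact (Algebra.commutes r _).symm
  | add x y _ _ hx hy => rw [mul_add, add_mul, hx, hy]
  | mul x y _ _ hx hy => rw [← mul_assoc, hx, mul_assoc, hy, mul_assoc]

lemma isQHRep_monomial :
    IsQHRep v (fun g : QHGen Q => monomial (qhWt Q g) (qhGen k Q v g)) := by
  have h := IsQHRep.qhGen k Q v
  have wa : ∀ a : Q.DArrow, qhWt Q (.arr a) = 1 := by rintro (a | a) <;> rfl
  refine ⟨fun i l => ?_, ?_, fun a => ?_, fun a => ?_, fun g => ?_, fun i => ?_⟩
  · rw [monomial_mul_monomial, h.vert_mul_vert]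
    split_ifs <;> simp [qhWt]
  · simp only [qhWt, monomial_zero_left, ← map_sum, h.vert_sum, map_one]
  · rw [monomial_mul_monomial, h.src_mul]; simp [qhWt]
  · rw [monomial_mul_monomial, h.mul_tgt]; simp [qhWt]
  · rw [monomial_mul_monomial, monomial_mul_monomial, h.central, add_comm]
  · simp only [monomial_mul_monomial, wa, smul_monomial]
    change _ = monomial (2 + 0) _
    rw [← h.heisenberg, map_sum]
    refine Finset.sum_congr rfl fun a _ => ?_
    split_ifs
    · rfl
    · exact (map_zero _).symm

/-- The homomorphism multiplying the component of degree `n` by the `n`-th power of a variable. -/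
noncomputable def grading : QHAlg k Q v →ₐ[k] (QHAlg k Q v)[X] := isQHRep_monomial.lift

lemma grading_list_prod (l : List (QHGen Q)) :
    grading (l.map (qhGen k Q v)).prod =
      monomial (l.map (qhWt Q)).sum (l.map (qhGen k Q v)).prod := by
  induction l with
  | nil => simp
  | cons g l ih =>
    rw [List.map_cons, List.prod_cons, map_mul, ih, grading, IsQHRep.lift_qhGen,
      monomial_mul_monomial, List.map_cons, List.sum_cons]

/-- Projection to the component of degree `n - 1`. -/
noncomputable def proj : ℕ → QHAlg k Q v →ₗ[k] QHAlg k Q v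
  | 0 => 0
  | n + 1 => ((lcoeff (QHAlg k Q v) n).restrictScalars k) ∘ₗ grading.toLinearMap

lemma proj_succ (n : ℕ) (x : QHAlg k Q v) : proj (n + 1) x = (grading x).coeff n := rfl

lemma eval_grading (x : QHAlg k Q v) : (grading x).eval 1 = x := by
  have : x ∈ Submodule.span k
      {x | ∃ l : List (QHGen Q), x = (l.map (qhGen k Q v)).prod} := by
    rw [span_list_prod]; trivial
  induction this using Submodule.span_induction with
  | mem x hx => obtain ⟨l, rfl⟩ := hx; rw [grading_list_prod]; simp
  | zero => simp
  | add x y _ _ hx hy => rw [map_add, eval_add, hx, hy]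
  | smul c x _ hx => rw [map_smul, eval_smul, hx]

lemma sum_proj (x : QHAlg k Q v) : ∑ n ∈ (grading x).support, proj (n + 1) x = x := by
  conv_rhs => rw [← eval_grading x, eval_eq_sum]
  simp [Polynomial.sum, proj_succ]

lemma eq_zero_of_proj (x : QHAlg k Q v) (h : ∀ n, proj n x = 0) : x = 0 := by
  rw [← sum_proj x]
  exact Finset.sum_eq_zero fun n _ => h _

lemma proj_mem_qhPiece (n : ℕ) (x : QHAlg k Q v) : proj (n + 1) x ∈ qhPiece k Q v n := by
  have : x ∈ Submodule.span k
      {x | ∃ l : List (QHGen Q), x = (l.map (qhGen k Q v)).prod} := by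
    rw [span_list_prod]; trivial
  induction this using Submodule.span_induction with
  | mem x hx =>
    obtain ⟨l, rfl⟩ := hx
    rw [proj_succ, grading_list_prod, coeff_monomial]
    split_ifs with h
    · exact Submodule.subset_span ⟨l, h, rfl⟩
    · exact Submodule.zero_mem _
  | zero => simp
  | add x y _ _ hx hy => rw [map_add]; exact Submodule.add_mem _ hx hy
  | smul c x _ hx => rw [map_smul]; exact Submodule.smul_mem _ _ hx

lemma proj_eq_of_mem {n : ℕ} {x : QHAlg k Q v} (hx : x ∈ qhPiece k Q v n) :
    proj (n + 1) x = x := by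
  induction hx using Submodule.span_induction with
  | mem x hx =>
    obtain ⟨l, rfl, rfl⟩ := hx
    rw [proj_succ, grading_list_prod, coeff_monomial, if_pos rfl]
  | zero => simp
  | add x y _ _ hx hy => rw [map_add, hx, hy]
  | smul c x _ hx => rw [map_smul, hx]

lemma proj_proj (n : ℕ) (x : QHAlg k Q v) : proj n (proj n x) = proj n x := by
  obtain _ | n := n
  · rfl
  · exact proj_eq_of_mem (proj_mem_qhPiece n x)

lemma grading_qhGen (g : QHGen Q) :
    grading (qhGen k Q v g) = monomial (qhWt Q g) (qhGen k Q v g) :=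
  isQHRep_monomial.lift_qhGen g

lemma proj_vert_mul (n : ℕ) (i : Fin Q.r) (x : QHAlg k Q v) :
    proj n (𝐞 i * x) = 𝐞 i * proj n x := by
  obtain _ | n := n
  · simp [proj]
  · simp only [proj_succ, map_mul, grading_qhGen, qhWt, monomial_zero_left, coeff_C_mul]

lemma proj_mul_vert (n : ℕ) (i : Fin Q.r) (x : QHAlg k Q v) :
    proj n (x * 𝐞 i) = proj n x * 𝐞 i := by
  obtain _ | n := n
  · simp [proj]
  · simp only [proj_succ, map_mul, grading_qhGen, qhWt, monomial_zero_left, coeff_mul_C]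

lemma proj_arr_mul (n : ℕ) (a : Q.DArrow) (x : QHAlg k Q v) :
    proj (n + 1) (𝐚 a * x) = 𝐚 a * proj n x := by
  have wa : qhWt Q (.arr a) = 1 := by cases a <;> rfl
  obtain _ | n := n
  · simp [grading_qhGen, wa, proj, mul_coeff_zero]
  · simp only [proj_succ, map_mul, grading_qhGen, wa, coeff_monomial_mul]

lemma proj_z_mul (n : ℕ) (x : QHAlg k Q v) : proj (n + 2) (𝐳 * x) = 𝐳 * proj n x := by
  obtain _ | n := n
  · simp [grading_qhGen, qhWt, proj, coeff_mul, coeff_monomial,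
      Finset.Nat.antidiagonal_succ]
  · simp only [proj_succ, map_mul, grading_qhGen, qhWt, coeff_monomial_mul]

lemma proj_one_z_mul (x : QHAlg k Q v) : proj 1 (𝐳 * x) = 0 := by
  simp [proj_succ, grading_qhGen, qhWt, mul_coeff_zero, coeff_monomial]

section Presentation

variable (v)

/-- The map whose image is the module of relations among the left multiples of arrows
and of the central variable. -/
noncomputable def relMap : QHAlg k Q v × (Q.DArrow → QHAlg k Q v) →ₗ[k]
    (Q.DArrow → QHAlg k Q v) × QHAlg k Q v where
  toFun p := (fun a => 𝐳 * p.2 a - dsign k a • (𝐚 a.swap * p.1),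
    (∑ i, v i • 𝐞 i) * p.1 - ∑ a, 𝐚 a * p.2 a)
  map_add' p q := by
    ext a
    · simp [mul_add]; abel
    · simp [mul_add, Finset.sum_add_distrib]; abel
  map_smul' c p := by
    ext a
    · simp [smul_sub, smul_comm c]
    · simp [smul_sub, Finset.smul_sum]

/-- Multiplication out of the module of formal left multiples. -/
noncomputable def evalMap : (Q.DArrow → QHAlg k Q v) × QHAlg k Q v →ₗ[k] QHAlg k Q v where
  toFun p := ∑ a, 𝐚 a * p.1 a + 𝐳 * p.2
  map_add' p q := by simp [mul_add, Finset.sum_add_distrib]; abel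
  map_smul' c p := by simp [Finset.smul_sum]

variable {v}

lemma sum_mesh : ∑ a : Q.DArrow, dsign k a • (𝐚 a * 𝐚 a.swap) = 𝐳 * ∑ i, v i • 𝐞 i := by
  rw [Finset.mul_sum]
  simp_rw [mul_smul_comm, ← (IsQHRep.qhGen k Q v).heisenberg]
  rw [Finset.sum_comm]
  simp

lemma evalMap_relMap (p : QHAlg k Q v × (Q.DArrow → QHAlg k Q v)) :
    evalMap v (relMap v p) = 0 := by
  have h1 : ∑ a : Q.DArrow, 𝐚 a * dsign k a • (𝐚 a.swap * p.1) =
      𝐳 * ((∑ i, v i • 𝐞 i) * p.1) := by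
    rw [← mul_assoc, ← sum_mesh, Finset.sum_mul]
    exact Finset.sum_congr rfl fun a _ => by rw [mul_smul_comm, smul_mul_assoc, mul_assoc]
  have h2 : ∑ a : Q.DArrow, 𝐚 a * (𝐳 * p.2 a) = 𝐳 * ∑ a, 𝐚 a * p.2 a := by
    rw [Finset.mul_sum]
    exact Finset.sum_congr rfl fun a _ => by rw [← mul_assoc, ← z_mul_comm, mul_assoc]
  simp only [evalMap, relMap, LinearMap.coe_mk, AddHom.coe_mk,
    Finset.sum_sub_distrib, h1, h2, mul_sub]
  abel

variable (v) in
/-- The module of formal left multiples modulo the expected relations, with a copy of the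
degree zero part added. -/
abbrev PresModule : Type :=
  (Fin Q.r → k) × (((Q.DArrow → QHAlg k Q v) × QHAlg k Q v) ⧸ LinearMap.range (relMap v))

variable (v) in
/-- The canonical map from the presented module to the algebra. -/
noncomputable def presEval : PresModule v →ₗ[k] QHAlg k Q v :=
  LinearMap.coprod (∑ i, (LinearMap.proj i).smulRight (𝐞 i))
    ((LinearMap.range (relMap v)).liftQ (evalMap v) (by
      rintro _ ⟨p, rfl⟩
      exact evalMap_relMap p))

lemma presEval_mk (c : Fin Q.r → k) (p : (Q.DArrow → QHAlg k Q v) × QHAlg k Q v) :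
    presEval v (c, Submodule.Quotient.mk p) = ∑ i, c i • 𝐞 i + (∑ a, 𝐚 a * p.1 a + 𝐳 * p.2) := by
  rw [presEval, LinearMap.coprod_apply, Submodule.liftQ_apply]
  simp [evalMap]

/-- The action of a trivial path on formal left multiples. -/
noncomputable def presVertAux (i : Fin Q.r) : (Q.DArrow → QHAlg k Q v) × QHAlg k Q v →ₗ[k]
    (Q.DArrow → QHAlg k Q v) × QHAlg k Q v where
  toFun p := (fun a => if i = dsrc a then p.1 a else 0, 𝐞 i * p.2)
  map_add' p q := by
    ext a
    · simp only [Prod.fst_add, Pi.add_apply]; split_ifs <;> simp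
    · simp [mul_add]
  map_smul' c p := by
    ext a
    · simp
    · simp

lemma presVertAux_relMap (i : Fin Q.r) (p : QHAlg k Q v × (Q.DArrow → QHAlg k Q v)) :
    presVertAux i (relMap v p) =
      relMap v (𝐞 i * p.1, fun a => if i = dsrc a then p.2 a else 0) := by
  have h := IsQHRep.qhGen k Q v
  ext a
  · simp only [presVertAux, relMap, LinearMap.coe_mk, AddHom.coe_mk, ← mul_assoc, h.arr_mul_vert,
      dtgt_swap]
    by_cases h' : i = dsrc a <;> simp [h']
  · have e1 : 𝐞 i * ∑ l, v l • 𝐞 l = (∑ l, v l • 𝐞 l) * 𝐞 i := by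
      simp [Finset.mul_sum, Finset.sum_mul, h.vert_mul_vert]
    simp only [presVertAux, relMap, LinearMap.coe_mk, AddHom.coe_mk, ← mul_assoc, ← e1, mul_sub,
      Finset.mul_sum (s := Finset.univ) (f := fun a => 𝐚 a * p.2 a), h.vert_mul_arr]
    congr 1
    refine Finset.sum_congr rfl fun a _ => ?_
    by_cases h' : i = dsrc a <;> simp [h']

variable (v) in
/-- The action of a trivial path on the presented module. -/
noncomputable def presVert (i : Fin Q.r) : PresModule v →ₗ[k] PresModule v :=
  LinearMap.prodMap (LinearMap.single k (fun _ => k) i ∘ₗ LinearMap.proj i)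
    (Submodule.mapQ _ _ (presVertAux i) (by
      rintro _ ⟨p, rfl⟩
      exact ⟨_, (presVertAux_relMap i p).symm⟩))

lemma presVert_mk (i : Fin Q.r) (c : Fin Q.r → k) (p : (Q.DArrow → QHAlg k Q v) × QHAlg k Q v) :
    presVert v i (c, Submodule.Quotient.mk p) = (Pi.single i (c i),
      Submodule.Quotient.mk (fun a => if i = dsrc a then p.1 a else 0, 𝐞 i * p.2)) := rfl

lemma presModule_cases (n : PresModule v) : ∃ c p, n = (c, Submodule.Quotient.mk p) := by
  obtain ⟨c, q⟩ := n
  obtain ⟨p, rfl⟩ := Submodule.Quotient.mk_surjective _ q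
  exact ⟨c, p, rfl⟩

lemma presEval_presVert (i : Fin Q.r) (n : PresModule v) :
    presEval v (presVert v i n) = 𝐞 i * presEval v n := by
  have h := IsQHRep.qhGen k Q v
  obtain ⟨c, p, rfl⟩ := presModule_cases n
  rw [presVert_mk, presEval_mk, presEval_mk, mul_add, mul_add, Finset.mul_sum, Finset.mul_sum,
    ← mul_assoc, ← mul_assoc, z_mul_comm]
  congr 1
  · simp [h.vert_mul_vert, Pi.single_apply]
  · congr 1
    refine Finset.sum_congr rfl fun a _ => ?_
    rw [← mul_assoc, h.vert_mul_arr]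
    by_cases h' : i = dsrc a <;> simp [h']

open Classical in
variable (v) in
/-- The action of an arrow on the presented module. -/
noncomputable def presArr (a : Q.DArrow) : PresModule v →ₗ[k] PresModule v :=
  LinearMap.inr k _ _ ∘ₗ Submodule.mkQ _ ∘ₗ LinearMap.inl k _ _ ∘ₗ
    LinearMap.single k (fun _ : Q.DArrow => QHAlg k Q v) a ∘ₗ
      LinearMap.mulLeft k (𝐞 (dtgt a)) ∘ₗ presEval v

open Classical in
lemma presArr_apply (a : Q.DArrow) (n : PresModule v) : presArr v a n =
    (0, Submodule.Quotient.mk (Pi.single a (𝐞 (dtgt a) * presEval v n), 0)) := rfl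

lemma presEval_presArr (a : Q.DArrow) (n : PresModule v) :
    presEval v (presArr v a n) = 𝐚 a * presEval v n := by
  classical
  rw [presArr_apply, presEval_mk]
  simp only [Pi.zero_apply, zero_smul, Finset.sum_const_zero, zero_add, mul_zero, add_zero]
  rw [Finset.sum_eq_single a (fun b _ hb => by simp [hb]) (by simp), Pi.single_eq_same,
    ← mul_assoc, (IsQHRep.qhGen k Q v).mul_tgt]

variable (v) in
/-- The action of the central variable on the presented module. -/
noncomputable def presZ : PresModule v →ₗ[k] PresModule v :=
  LinearMap.inr k _ _ ∘ₗ Submodule.mkQ _ ∘ₗ LinearMap.inr k _ _ ∘ₗ presEval v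

lemma presZ_apply (n : PresModule v) :
    presZ v n = (0, Submodule.Quotient.mk (0, presEval v n)) := rfl

lemma presEval_presZ (n : PresModule v) : presEval v (presZ v n) = 𝐳 * presEval v n := by
  rw [presZ_apply, presEval_mk]
  simp

variable (v) in
/-- The action of the generators on the presented module. -/
noncomputable def presGen : QHGen Q → Module.End k (PresModule v)
  | .vert i => presVert v i
  | .fwd e => presArr v (Sum.inl e)
  | .bwd e => presArr v (Sum.inr e)
  | .z => presZ v

lemma presGen_arr (a : Q.DArrow) : presGen v (.arr a) = presArr v a := by cases a <;> rfl

lemma presEval_presGen (g : QHGen Q) (n : PresModule v) :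
    presEval v (presGen v g n) = qhGen k Q v g * presEval v n := by
  cases g with
  | vert i => exact presEval_presVert i n
  | fwd e => exact presEval_presArr (Sum.inl e) n
  | bwd e => exact presEval_presArr (Sum.inr e) n
  | z => exact presEval_presZ n

lemma mk_relMap (p : QHAlg k Q v × (Q.DArrow → QHAlg k Q v)) :
    (Submodule.Quotient.mk (relMap v p) :
      ((Q.DArrow → QHAlg k Q v) × QHAlg k Q v) ⧸ LinearMap.range (relMap v)) = 0 :=
  (Submodule.Quotient.mk_eq_zero _).2 ⟨p, rfl⟩

lemma presZ_presArr (a : Q.DArrow) (n : PresModule v) :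
    presZ v (presArr v a n) = presArr v a (presZ v n) := by
  classical
  rw [presZ_apply, presEval_presArr, presArr_apply, presEval_presZ, eq_comm, ← sub_eq_zero]
  refine Prod.ext (sub_zero _) ?_
  rw [Prod.snd_sub, ← Submodule.Quotient.mk_sub, Prod.snd_zero,
    ← mk_relMap (v := v) (0, Pi.single a (𝐞 (dtgt a) * presEval v n))]
  congr 1
  ext b
  · by_cases hb : b = a
    · subst hb
      simp only [relMap, LinearMap.coe_mk, AddHom.coe_mk, Pi.single_eq_same]
      simp [← mul_assoc, z_mul_comm (𝐞 _)]
    · simp [relMap, hb]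
  · simp only [relMap, LinearMap.coe_mk, AddHom.coe_mk]
    rw [Finset.sum_eq_single a (fun b _ hb => by simp [hb]) (by simp), Pi.single_eq_same,
      ← mul_assoc (𝐚 a), (IsQHRep.qhGen k Q v).mul_tgt]
    simp

lemma sum_presArr (y : Q.DArrow → PresModule v) : ∑ a, presArr v a (y a) =
    (0, Submodule.Quotient.mk (fun a => 𝐞 (dtgt a) * presEval v (y a), 0)) := by
  classical
  have : ∀ a, presArr v a (y a) = LinearMap.inr k (Fin Q.r → k) _
      (Submodule.mkQ (LinearMap.range (relMap v))
        (LinearMap.inl k _ (QHAlg k Q v) (Pi.single a (𝐞 (dtgt a) * presEval v (y a))))) :=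
    fun a => rfl
  simp_rw [this, ← map_sum, Finset.univ_sum_single]
  rfl

lemma isQHRep_presGen : IsQHRep v (presGen v) := by
  classical
  have h := IsQHRep.qhGen k Q v
  refine ⟨fun i l => ?_, ?_, fun a => ?_, fun a => ?_, fun g => ?_, fun i => ?_⟩
  · refine LinearMap.ext fun n => ?_
    obtain ⟨c, p, rfl⟩ := presModule_cases n
    simp only [Module.End.mul_apply, presGen, presVert_mk, ← mul_assoc, h.vert_mul_vert]
    split_ifs with hil
    · subst hil
      simp only [presVert_mk, Pi.single_eq_same]
      congr 3
      ext a
      split_ifs <;> rfl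
    · refine Prod.ext (by simp [hil]) ?_
      change _ = (0 : _ ⧸ LinearMap.range (relMap v))
      rw [Submodule.Quotient.mk_eq_zero]
      convert Submodule.zero_mem _
      · split_ifs <;> simp_all
      · simp
  · refine LinearMap.ext fun n => ?_
    obtain ⟨c, p, rfl⟩ := presModule_cases n
    simp only [LinearMap.sum_apply, presGen, presVert_mk, Module.End.one_apply]
    refine Prod.ext ?_ ?_
    · rw [Prod.fst_sum]
      exact Finset.univ_sum_single c
    · rw [Prod.snd_sum]
      simp only [← Submodule.mkQ_apply, ← map_sum]
      congr 1
      refine Prod.ext ?_ ?_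
      · ext a
        simp [Prod.fst_sum, Finset.sum_apply]
      · rw [Prod.snd_sum, ← Finset.sum_mul, h.vert_sum, one_mul]
  · rw [presGen_arr]
    refine LinearMap.ext fun n => ?_
    change presVert v _ (presArr v a n) = _
    rw [presArr_apply, presVert_mk]
    congr 3
    · simp
    · ext b
      by_cases hb : b = a
      · subst hb; simp
      · simp [hb]
    · simp
  · rw [presGen_arr]
    refine LinearMap.ext fun n => ?_
    change presArr v a (presVert v _ n) = _
    rw [presArr_apply, presArr_apply, presEval_presVert, ← mul_assoc, h.vert_mul_vert, if_pos rfl]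
  · refine LinearMap.ext fun n => ?_
    cases g with
    | vert i =>
      change presZ v (presVert v i n) = presVert v i (presZ v n)
      rw [presZ_apply, presZ_apply, presVert_mk, presEval_presVert]
      congr 3
      · simp
      · ext; simp
    | fwd e => exact presZ_presArr _ n
    | bwd e => exact presZ_presArr _ n
    | z => rfl
  · refine LinearMap.ext fun n => ?_
    have e1 : (∑ a : Q.DArrow, if dsrc a = i then
        dsign k a • (presGen v (.arr a) * presGen v (.arr a.swap)) else 0) n =
        ∑ a, presArr v a (if dsrc a = i then dsign k a • presArr v a.swap n else 0) := by
      rw [LinearMap.sum_apply]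
      refine Finset.sum_congr rfl fun a _ => ?_
      split_ifs <;> simp [presGen_arr]
    rw [e1, sum_presArr]
    change _ = v i • presZ v (presVert v i n)
    rw [presZ_apply, presEval_presVert, eq_comm, ← sub_eq_zero]
    refine Prod.ext (by simp) ?_
    rw [Prod.snd_sub, Prod.smul_snd, ← Submodule.Quotient.mk_smul, ← Submodule.Quotient.mk_sub,
      Prod.snd_zero, ← mk_relMap (v := v) (𝐞 i * presEval v n, 0)]
    congr 1
    ext a
    · simp only [relMap, LinearMap.coe_mk, AddHom.coe_mk, ← mul_assoc, h.arr_mul_vert, dtgt_swap]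
      by_cases ha : dsrc a = i
      · subst ha
        have := h.src_mul a.swap
        rw [dsrc_swap] at this
        simp [presEval_presArr, ← mul_assoc, this]
      · simp [ha, Ne.symm ha]
    · simp [relMap, ← mul_assoc, Finset.sum_mul, h.vert_mul_vert]

/-- The action of the algebra on the presented module. -/
noncomputable def presRep : QHAlg k Q v →ₐ[k] Module.End k (PresModule v) :=
  isQHRep_presGen.lift

lemma presRep_qhGen (g : QHGen Q) : presRep (qhGen k Q v g) = presGen v g :=
  isQHRep_presGen.lift_qhGen g

lemma presEval_presRep (x : QHAlg k Q v) (n : PresModule v) :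
    presEval v (presRep x n) = x * presEval v n := by
  have : x ∈ Algebra.adjoin k (Set.range (qhGen k Q v)) := by
    rw [adjoin_range_qhGen]; trivial
  induction this using Algebra.adjoin_induction generalizing n with
  | mem x hx => obtain ⟨g, rfl⟩ := hx; rw [presRep_qhGen, presEval_presGen]
  | algebraMap r => simp [Algebra.algebraMap_eq_smul_one]
  | add x y _ _ hx hy => rw [map_add, LinearMap.add_apply, map_add, hx, hy, add_mul]
  | mul x y _ _ hx hy => rw [map_mul, Module.End.mul_apply, hx, hy, mul_assoc]

lemma presEval_one : presEval v ((fun _ => 1), 0) = 1 := by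
  rw [← Submodule.Quotient.mk_zero, presEval_mk]
  simp [(IsQHRep.qhGen k Q v).vert_sum]

/-- Every element is a combination of trivial paths and left multiples of arrows and of the
central variable. -/
lemma exists_decomposition (x : QHAlg k Q v) : ∃ (c : Fin Q.r → k) (y : Q.DArrow → QHAlg k Q v)
    (u : QHAlg k Q v), x = ∑ i, c i • 𝐞 i + (∑ a, 𝐚 a * y a + 𝐳 * u) := by
  obtain ⟨c, p, h⟩ := presModule_cases (presRep x ((fun _ => 1), 0))
  refine ⟨c, p.1, p.2, ?_⟩
  rw [← presEval_mk, ← h, presEval_presRep, presEval_one, mul_one]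

/-- The relations among left multiples of arrows and of the central variable are generated by the
mesh relations and by the centrality of the latter. -/
lemma exists_of_sum_eq_zero (y : Q.DArrow → QHAlg k Q v) (u : QHAlg k Q v)
    (hy : ∀ a, 𝐞 (dtgt a) * y a = y a) (h : ∑ a, 𝐚 a * y a + 𝐳 * u = 0) :
    ∃ (x : QHAlg k Q v) (w : Q.DArrow → QHAlg k Q v),
      (∀ a, y a = 𝐳 * w a - dsign k a • (𝐚 a.swap * x)) ∧
        u = (∑ i, v i • 𝐞 i) * x - ∑ a, 𝐚 a * w a := by
  set n₀ : PresModule v := ((fun _ => 1), 0)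
  have ev : ∀ x, presEval v (presRep x n₀) = x := fun x => by
    rw [presEval_presRep, presEval_one, mul_one]
  have h1 : presRep (∑ a, 𝐚 a * y a + 𝐳 * u) n₀ =
      (0, Submodule.Quotient.mk (y, u)) := by
    have e1 : presRep (∑ a, 𝐚 a * y a + 𝐳 * u) n₀ =
        ∑ a, presArr v a (presRep (y a) n₀) +
          presZ v (presRep u n₀) := by
      simp only [map_add, map_sum, map_mul, LinearMap.add_apply, LinearMap.sum_apply,
        Module.End.mul_apply, presRep_qhGen, presGen_arr]
      rfl
    rw [e1, sum_presArr, presZ_apply]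
    simp only [ev, hy]
    refine Prod.ext (add_zero _) ?_
    rw [Prod.snd_add, ← Submodule.Quotient.mk_add]
    simp
  rw [h, map_zero, LinearMap.zero_apply] at h1
  have h2 := (Submodule.Quotient.mk_eq_zero _).1 (congrArg Prod.snd h1).symm
  obtain ⟨⟨x, w⟩, hxw⟩ := h2
  exact ⟨x, w, fun a => (congrFun (congrArg Prod.fst hxw) a).symm, (congrArg Prod.snd hxw).symm⟩

end Presentation

variable (k Q v) in
/-- The multiples of the central variable. -/
noncomputable def zRange : Submodule k (QHAlg k Q v) := LinearMap.range (LinearMap.mulLeft k 𝐳)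

lemma z_mul_mem_zRange (x : QHAlg k Q v) : 𝐳 * x ∈ zRange k Q v := ⟨x, rfl⟩

lemma mul_mem_zRange (x : QHAlg k Q v) {y : QHAlg k Q v} (hy : y ∈ zRange k Q v) :
    x * y ∈ zRange k Q v := by
  obtain ⟨w, rfl⟩ := hy
  exact ⟨x * w, by simp only [LinearMap.mulLeft_apply, ← mul_assoc, z_mul_comm x]⟩

lemma proj_mem_zRange (n : ℕ) {x : QHAlg k Q v} (hx : x ∈ zRange k Q v) :
    proj n x ∈ zRange k Q v := by
  obtain ⟨w, rfl⟩ := hx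
  rw [LinearMap.mulLeft_apply]
  match n with
  | 0 => exact Submodule.zero_mem _
  | 1 => rw [proj_one_z_mul]; exact Submodule.zero_mem _
  | n + 2 => rw [proj_z_mul]; exact z_mul_mem_zRange _

/-- Left multiplication modulo the central variable. -/
noncomputable def quotMulLeft (x : QHAlg k Q v) :
    (QHAlg k Q v ⧸ zRange k Q v) →ₗ[k] (QHAlg k Q v ⧸ zRange k Q v) :=
  Submodule.mapQ _ _ (LinearMap.mulLeft k x) fun _ hy => mul_mem_zRange x hy

lemma add_neg_one_smul (x : QHAlg k Q v) : x + (-1 : k) • x = 0 := by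
  nth_rw 1 [← one_smul k x]
  rw [← add_smul, add_neg_cancel, zero_smul]

lemma quotMulLeft_mk (x y : QHAlg k Q v) :
    quotMulLeft x (Submodule.Quotient.mk y) = Submodule.Quotient.mk (x * y) := rfl

lemma isQHRep_single : IsQHRep v (B := Fin Q.r → k) (fun g : QHGen Q => match g with
    | .vert i => Pi.single i 1
    | _ => 0) := by
  refine ⟨fun i l => ?_, Finset.univ_sum_single _, fun a => ?_, fun a => ?_, fun g => ?_,
    fun i => ?_⟩
  · split_ifs with h
    · subst h; simp [← Pi.single_mul]
    · ext m
      by_cases hm : m = i <;> simp_all [Pi.single_apply]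
  · cases a <;> simp [QHGen.arr]
  · cases a <;> simp [QHGen.arr]
  · simp
  · simp only [zero_mul, smul_zero]
    refine Finset.sum_eq_zero fun a _ => ?_
    cases a <;> simp [QHGen.arr]

lemma vert_notMem_zRange (j : Fin Q.r) : 𝐞 j ∉ zRange k Q v := by
  rintro ⟨w, hw⟩
  have := congrArg (isQHRep_single (v := v)).lift hw
  rw [LinearMap.mulLeft_apply, map_mul, IsQHRep.lift_qhGen, IsQHRep.lift_qhGen, zero_mul] at this
  simpa using congrFun this j

lemma proj_one (c : Fin Q.r → k) (y : Q.DArrow → QHAlg k Q v) (u : QHAlg k Q v) :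
    proj 1 (∑ i, c i • 𝐞 i + (∑ a, 𝐚 a * y a + 𝐳 * u)) = ∑ i, c i • 𝐞 i := by
  simp only [map_add, map_sum, map_smul, proj_arr_mul, proj_one_z_mul]
  simp [proj, grading_qhGen, qhWt]

lemma proj_add_two (n : ℕ) (c : Fin Q.r → k) (y : Q.DArrow → QHAlg k Q v) (u : QHAlg k Q v) :
    proj (n + 2) (∑ i, c i • 𝐞 i + (∑ a, 𝐚 a * y a + 𝐳 * u)) =
      ∑ a, 𝐚 a * proj (n + 1) (y a) + 𝐳 * proj n u := by
  simp only [map_add, map_sum, map_smul, proj_arr_mul, proj_z_mul]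
  simp [proj_succ, grading_qhGen, qhWt]

/-- The elements of degree `n - 1` which are combinations of paths ending at `j`. -/
noncomputable def column (j : Fin Q.r) (n : ℕ) : Submodule k (QHAlg k Q v) :=
  LinearMap.eqLocus (proj n) LinearMap.id ⊓
    LinearMap.eqLocus (LinearMap.mulRight k (𝐞 j)) LinearMap.id

lemma mem_column {j : Fin Q.r} {n : ℕ} {x : QHAlg k Q v} :
    x ∈ column j n ↔ proj n x = x ∧ x * 𝐞 j = x := Iff.rfl

lemma proj_mul_vert_mem_column (j : Fin Q.r) (n : ℕ) (x : QHAlg k Q v) :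
    proj n x * 𝐞 j ∈ column j n := by
  refine ⟨?_, ?_⟩
  · change proj n (proj n x * 𝐞 j) = proj n x * 𝐞 j
    rw [proj_mul_vert, proj_proj]
  · change proj n x * 𝐞 j * 𝐞 j = proj n x * 𝐞 j
    rw [mul_assoc, (IsQHRep.qhGen k Q v).vert_mul_vert, if_pos rfl]

lemma proj_mul_vert_eq {j : Fin Q.r} {n : ℕ} {x : QHAlg k Q v} (hx : x ∈ column j n) :
    proj n x * 𝐞 j = x := by
  rw [mem_column] at hx
  rw [hx.1, hx.2]

lemma column_zero (j : Fin Q.r) : (column j 0 : Submodule k (QHAlg k Q v)) = ⊥ :=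
  eq_bot_iff.2 fun _ hx => (mem_column.1 hx).1.symm

lemma column_one (j : Fin Q.r) : (column j 1 : Submodule k (QHAlg k Q v)) =
    Submodule.span k {𝐞 j} := by
  have h := IsQHRep.qhGen k Q v
  refine le_antisymm (fun x hx => ?_) ?_
  · rw [← proj_mul_vert_eq hx]
    obtain ⟨c, y, u, hd⟩ := exists_decomposition x
    rw [hd, proj_one, Finset.sum_mul]
    refine Submodule.sum_mem _ fun i _ => ?_
    rw [smul_mul_assoc, h.vert_mul_vert]
    refine Submodule.smul_mem _ _ ?_
    split_ifs
    · exact Submodule.mem_span_singleton_self _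
    · exact Submodule.zero_mem _
  · rw [Submodule.span_singleton_le_iff_mem, mem_column, h.vert_mul_vert, if_pos rfl]
    refine ⟨?_, rfl⟩
    simp [proj_succ, grading_qhGen, qhWt]

lemma vert_mul_mem_column {j : Fin Q.r} {n : ℕ} (i : Fin Q.r) {x : QHAlg k Q v}
    (hx : x ∈ column j n) : 𝐞 i * x ∈ column j n := by
  rw [mem_column] at hx ⊢
  rw [proj_vert_mul, mul_assoc, hx.1, hx.2]
  exact ⟨rfl, rfl⟩

lemma arr_mul_mem_column {j : Fin Q.r} {n : ℕ} (a : Q.DArrow) {x : QHAlg k Q v}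
    (hx : x ∈ column j n) : 𝐚 a * x ∈ column j (n + 1) := by
  rw [mem_column] at hx ⊢
  rw [proj_arr_mul, mul_assoc, hx.1, hx.2]
  exact ⟨rfl, rfl⟩

lemma exists_of_mem_column {j : Fin Q.r} {n : ℕ} {x : QHAlg k Q v} (hx : x ∈ column j (n + 2)) :
    ∃ y : Q.DArrow → QHAlg k Q v, (∀ a, y a ∈ column j (n + 1)) ∧
      x - ∑ a, 𝐚 a * y a ∈ zRange k Q v := by
  obtain ⟨c, y, u, hd⟩ := exists_decomposition x
  refine ⟨fun a => proj (n + 1) (y a) * 𝐞 j, fun a => proj_mul_vert_mem_column _ _ _,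
    proj n u * 𝐞 j, ?_⟩
  nth_rw 1 [← proj_mul_vert_eq hx]
  rw [hd, proj_add_two, add_mul, Finset.sum_mul, LinearMap.mulLeft_apply]
  simp only [mul_assoc, add_sub_cancel_left]

variable (v) in
/-- Modulo the central variable, the paths ending at a given vertex form a mesh module. -/
noncomputable def meshModule (j : Fin Q.r) :
    MeshModule k Q (QHAlg k Q v ⧸ zRange k Q v) where
  e i := quotMulLeft (𝐞 i)
  act a := quotMulLeft (𝐚 a)
  Y n := (column j n).map (zRange k Q v).mkQ
  j := j
  gen := Submodule.Quotient.mk (𝐞 j)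
  e_e i l x := by
    obtain ⟨x, rfl⟩ := Submodule.Quotient.mk_surjective _ x
    rw [quotMulLeft_mk, quotMulLeft_mk, ← mul_assoc, (IsQHRep.qhGen k Q v).vert_mul_vert]
    split_ifs <;> simp
  e_sum x := by
    obtain ⟨x, rfl⟩ := Submodule.Quotient.mk_surjective _ x
    simp only [quotMulLeft_mk]
    simp only [← Submodule.mkQ_apply, ← map_sum, ← Finset.sum_mul,
      (IsQHRep.qhGen k Q v).vert_sum, one_mul]
  e_act i a x := by
    obtain ⟨x, rfl⟩ := Submodule.Quotient.mk_surjective _ x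
    rw [quotMulLeft_mk, quotMulLeft_mk, ← mul_assoc, (IsQHRep.qhGen k Q v).vert_mul_arr]
    split_ifs <;> simp
  act_e i a x := by
    obtain ⟨x, rfl⟩ := Submodule.Quotient.mk_surjective _ x
    rw [quotMulLeft_mk, quotMulLeft_mk, quotMulLeft_mk, ← mul_assoc,
      (IsQHRep.qhGen k Q v).arr_mul_vert]
    split_ifs <;> simp
  mesh x := by
    obtain ⟨x, rfl⟩ := Submodule.Quotient.mk_surjective _ x
    simp only [quotMulLeft_mk]
    simp only [← Submodule.mkQ_apply, ← map_smul, ← map_sum, ← mul_assoc,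
      ← smul_mul_assoc, ← Finset.sum_mul]
    simp only [smul_mul_assoc]
    rw [sum_mesh, mul_assoc, Submodule.mkQ_apply, Submodule.Quotient.mk_eq_zero]
    exact z_mul_mem_zRange _
  e_mem n i := by
    rintro _ ⟨x, hx, rfl⟩
    exact ⟨_, vert_mul_mem_column i hx, rfl⟩
  act_mem n a := by
    rintro _ ⟨x, hx, rfl⟩
    exact ⟨_, arr_mul_mem_column a hx, rfl⟩
  Y_zero := by rw [column_zero, Submodule.map_bot]
  Y_one := by rw [column_one, Submodule.map_span, Set.image_singleton, Submodule.mkQ_apply]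
  gen_ne := by
    rw [Ne, Submodule.Quotient.mk_eq_zero]
    exact vert_notMem_zRange j
  e_gen := by rw [quotMulLeft_mk, (IsQHRep.qhGen k Q v).vert_mul_vert, if_pos rfl]
  surj n := by
    rintro _ ⟨x, hx, rfl⟩
    obtain ⟨y, hy, h⟩ := exists_of_mem_column hx
    refine ⟨fun a => Submodule.Quotient.mk (y a), fun a => ⟨_, hy a, rfl⟩, ?_⟩
    simp only [quotMulLeft_mk]
    simp only [← Submodule.mkQ_apply, ← map_sum]
    exact (Submodule.Quotient.eq _).2 h
  exact n f hf hef h := by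
    choose y hy hyf using hf
    obtain rfl : (fun a => Submodule.Quotient.mk (y a)) = f := funext hyf
    have hh := IsQHRep.qhGen k Q v
    obtain ⟨u, hu⟩ : ∑ a, 𝐚 a * (𝐞 (dtgt a) * y a) ∈ zRange k Q v := by
      rw [← Submodule.Quotient.mk_eq_zero, ← Submodule.mkQ_apply, map_sum, ← h]
      refine Finset.sum_congr rfl fun a _ => ?_
      rw [← mul_assoc, hh.mul_tgt]
      rfl
    rw [LinearMap.mulLeft_apply] at hu
    obtain ⟨x, w, hxw, -⟩ := exists_of_sum_eq_zero (fun a => 𝐞 (dtgt a) * y a) ((-1 : k) • u)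
      (fun a => by rw [← mul_assoc, hh.vert_mul_vert, if_pos rfl])
      (by rw [← hu, mul_smul_comm, add_neg_one_smul])
    refine ⟨_, ⟨_, proj_mul_vert_mem_column j n ((-1 : k) • x), rfl⟩, fun a => ?_⟩
    rw [← hef a, quotMulLeft_mk, Submodule.mkQ_apply, quotMulLeft_mk,
      ← Submodule.Quotient.mk_smul, Submodule.Quotient.eq]
    have e1 : 𝐞 (dtgt a) * y a - dsign k a • (𝐚 a.swap * (proj n ((-1 : k) • x) * 𝐞 j)) =
        proj (n + 1) (𝐳 * (w a * 𝐞 j)) := by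
      rw [← proj_mul_vert_eq (vert_mul_mem_column (dtgt a) (hy a)), hxw, map_sub, sub_mul,
        map_smul, proj_arr_mul, ← mul_assoc 𝐳, proj_mul_vert, map_smul, smul_mul_assoc,
        smul_mul_assoc, mul_smul_comm, smul_comm (dsign k a), mul_assoc, sub_sub,
        add_neg_one_smul, sub_zero]
    rw [e1]
    exact proj_mem_zRange _ (z_mul_mem_zRange _)

lemma mem_zRange_of_column (hconn : Q.Connected) (hnd : ¬ Q.IsDynkin) {j : Fin Q.r} {n : ℕ}
    {x : QHAlg k Q v} (hx : x ∈ column j n) (h : ∀ a, 𝐚 a * x ∈ zRange k Q v) :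
    x ∈ zRange k Q v := by
  rw [← Submodule.Quotient.mk_eq_zero]
  exact (meshModule v j).socleFree hconn hnd n _ ⟨x, hx, rfl⟩
    fun a => (Submodule.Quotient.mk_eq_zero _).2 (h a)

/-- Modulo the central variable there is no nonzero element annihilated by all arrows. -/
lemma mem_zRange_of_arr_mul (hconn : Q.Connected) (hnd : ¬ Q.IsDynkin) {x : QHAlg k Q v}
    (h : ∀ a, 𝐚 a * x ∈ zRange k Q v) : x ∈ zRange k Q v := by
  rw [← mul_one x, ← (IsQHRep.qhGen k Q v).vert_sum, Finset.mul_sum]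
  refine Submodule.sum_mem _ fun j _ => ?_
  rw [← sum_proj (x * 𝐞 j)]
  refine Submodule.sum_mem _ fun n _ => ?_
  rw [proj_mul_vert]
  refine mem_zRange_of_column hconn hnd (proj_mul_vert_mem_column j _ x) fun a => ?_
  obtain ⟨w, hw⟩ := h a
  rw [← proj_mul_vert, ← proj_arr_mul, ← mul_assoc, ← hw, LinearMap.mulLeft_apply, mul_assoc]
  exact proj_mem_zRange _ (z_mul_mem_zRange _)

lemma exists_of_z_mul_eq_zero (hconn : Q.Connected) (hnd : ¬ Q.IsDynkin) {y : QHAlg k Q v}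
    (hy : 𝐳 * y = 0) : ∃ u : Q.DArrow → QHAlg k Q v, (∀ a, 𝐳 * u a = 0) ∧
      y = ∑ a, 𝐚 a * u a := by
  obtain ⟨x, w, hxw, rfl⟩ := exists_of_sum_eq_zero (fun _ => 0) y (by simp) (by simpa using hy)
  have hx : ∀ a : Q.DArrow, 𝐳 * w a = dsign k a • (𝐚 a.swap * x) := fun a =>
    sub_eq_zero.1 (hxw a).symm
  obtain ⟨x, rfl⟩ : x ∈ zRange k Q v := by
    refine mem_zRange_of_arr_mul hconn hnd fun a => ?_
    have := hx a.swap
    rw [Sum.swap_swap] at this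
    rw [← one_smul k (𝐚 a * x), ← dsign_mul_self k a.swap, mul_smul, ← this]
    exact Submodule.smul_mem _ _ (z_mul_mem_zRange _)
  rw [LinearMap.mulLeft_apply] at hx ⊢
  refine ⟨fun a => dsign k a • (𝐚 a.swap * x) - w a, fun a => ?_, ?_⟩
  · rw [mul_sub, hx, mul_smul_comm, ← mul_assoc, z_mul_comm (𝐚 a.swap), mul_assoc, sub_self]
  · simp only [mul_sub, Finset.sum_sub_distrib]
    congr 1
    rw [← mul_assoc, ← z_mul_comm, ← sum_mesh, Finset.sum_mul]
    simp [mul_assoc]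

/-- The central variable is not a zero divisor. -/
lemma eq_zero_of_z_mul (hconn : Q.Connected) (hnd : ¬ Q.IsDynkin) {y : QHAlg k Q v}
    (hy : 𝐳 * y = 0) : y = 0 := by
  refine eq_zero_of_proj y fun n => ?_
  induction n generalizing y with
  | zero => rfl
  | succ n ih =>
    obtain ⟨u, hu, rfl⟩ := exists_of_z_mul_eq_zero hconn hnd hy
    rw [map_sum]
    exact Finset.sum_eq_zero fun a _ => by rw [proj_arr_mul, ih (hu a), mul_zero]

/-- The corner between `i` and `j` in degree `n - 1`. -/
noncomputable def corner (i j : Fin Q.r) (n : ℕ) : Submodule k (QHAlg k Q v) :=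
  column j n ⊓ LinearMap.eqLocus (LinearMap.mulLeft k (𝐞 i)) LinearMap.id

lemma mem_corner {i j : Fin Q.r} {n : ℕ} {x : QHAlg k Q v} :
    x ∈ corner i j n ↔ x ∈ column j n ∧ 𝐞 i * x = x := Iff.rfl

lemma vert_mul_mem_corner {i j : Fin Q.r} {n : ℕ} {x : QHAlg k Q v} (hx : x ∈ column j n) :
    𝐞 i * x ∈ corner i j n :=
  mem_corner.2 ⟨vert_mul_mem_column i hx, by
    rw [← mul_assoc, (IsQHRep.qhGen k Q v).vert_mul_vert, if_pos rfl]⟩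

lemma qhCorner_eq_corner (n : ℕ) (i j : Fin Q.r) : qhCorner k Q v n i j = corner i j (n + 1) := by
  ext x
  constructor
  · rintro ⟨x, hx, rfl⟩
    change 𝐞 i * (x * 𝐞 j) ∈ _
    rw [← proj_eq_of_mem hx]
    exact vert_mul_mem_corner (proj_mul_vert_mem_column _ _ _)
  · rintro ⟨hx, hi⟩
    refine ⟨x, ?_, ?_⟩
    · rw [← (mem_column.1 hx).1]
      exact proj_mem_qhPiece n x
    · change 𝐞 i * (x * 𝐞 j) = x
      rw [(mem_column.1 hx).2]
      exact hi

lemma corner_zero (i j : Fin Q.r) : (corner i j 0 : Submodule k (QHAlg k Q v)) = ⊥ := by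
  rw [corner, column_zero, bot_inf_eq]

lemma map_mkQ_corner (i j : Fin Q.r) (n : ℕ) :
    (corner i j n).map (zRange k Q v).mkQ = (meshModule v j).W n i := by
  ext x
  constructor
  · rintro ⟨x, ⟨hx, hi⟩, rfl⟩
    exact ⟨⟨x, hx, rfl⟩, congrArg (zRange k Q v).mkQ hi⟩
  · rintro ⟨⟨x, hx, rfl⟩, hi⟩
    exact ⟨_, vert_mul_mem_corner hx, hi⟩

lemma corner_one_inf (i j : Fin Q.r) : corner i j 1 ⊓ zRange k Q v = ⊥ := by
  rw [eq_bot_iff]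
  rintro x ⟨⟨hx, -⟩, ⟨w, rfl⟩⟩
  rw [Submodule.mem_bot, ← (mem_column.1 hx).1, LinearMap.mulLeft_apply, proj_one_z_mul]

lemma corner_add_two_inf (i j : Fin Q.r) (n : ℕ) :
    corner i j (n + 2) ⊓ zRange k Q v = (corner i j n).map (LinearMap.mulLeft k 𝐳) := by
  ext x
  constructor
  · rintro ⟨⟨hx, hi⟩, ⟨w, rfl⟩⟩
    refine ⟨𝐞 i * (proj n w * 𝐞 j), vert_mul_mem_corner (proj_mul_vert_mem_column _ _ _), ?_⟩
    replace hi : 𝐞 i * (𝐳 * w) = 𝐳 * w := hi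
    have h1 := proj_mul_vert_eq hx
    rw [LinearMap.mulLeft_apply] at h1 ⊢
    rw [proj_z_mul] at h1
    rw [← mul_assoc, z_mul_comm, mul_assoc, ← mul_assoc 𝐳, h1, hi]
    rfl
  · rintro ⟨x, ⟨hx, hi⟩, rfl⟩
    replace hi : 𝐞 i * x = x := hi
    replace hx := mem_column.1 hx
    refine ⟨mem_corner.2 ⟨mem_column.2 ⟨?_, ?_⟩, ?_⟩, z_mul_mem_zRange x⟩
    · rw [LinearMap.mulLeft_apply, proj_z_mul, hx.1]
    · rw [LinearMap.mulLeft_apply, mul_assoc, hx.2]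
    · rw [LinearMap.mulLeft_apply, ← mul_assoc, ← z_mul_comm, mul_assoc, hi]

lemma finite_corner (i j : Fin Q.r) (n : ℕ) :
    Module.Finite k (corner i j n : Submodule k (QHAlg k Q v)) := by
  have key : ∀ n, (corner i j n ⊓ zRange k Q v).FG →
      (corner i j n : Submodule k (QHAlg k Q v)).FG := fun n h => by
    refine Submodule.fg_of_fg_map_of_fg_inf_ker (zRange k Q v).mkQ ?_ ?_
    · rw [map_mkQ_corner]
      exact Module.Finite.iff_fg.1 ((meshModule v j).finite_W n i)
    · rwa [Submodule.ker_mkQ]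
  rw [Module.Finite.iff_fg]
  induction n using Nat.twoStepInduction with
  | zero => rw [corner_zero]; exact Submodule.fg_bot
  | one => exact key _ (by rw [corner_one_inf]; exact Submodule.fg_bot)
  | more n ih _ => exact key _ (by rw [corner_add_two_inf]; exact ih.map _)

lemma finrank_corner (i j : Fin Q.r) (n : ℕ) :
    Module.finrank k (corner i j n : Submodule k (QHAlg k Q v)) =
      Module.finrank k ((meshModule v j).W n i) +
        Module.finrank k (corner i j n ⊓ zRange k Q v : Submodule k (QHAlg k Q v)) := by
  have := finite_corner (v := v) i j n
  rw [← map_mkQ_corner]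
  exact Submodule.finrank_eq_finrank_map_mkQ_add _ _

lemma finrank_corner_add_two (hconn : Q.Connected) (hnd : ¬ Q.IsDynkin) (i j : Fin Q.r) (n : ℕ) :
    Module.finrank k (corner i j (n + 2) : Submodule k (QHAlg k Q v)) =
      Module.finrank k ((meshModule v j).W (n + 2) i) +
        Module.finrank k (corner i j n : Submodule k (QHAlg k Q v)) := by
  rw [finrank_corner, corner_add_two_inf]
  congr 1
  refine (LinearEquiv.finrank_eq (Submodule.equivMapOfInjective _ ?_ _)).symm
  exact (injective_iff_map_eq_zero _).2 fun _ h => eq_zero_of_z_mul hconn hnd h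

lemma finrank_W_eq (hconn : Q.Connected) (hnd : ¬ Q.IsDynkin) (v w : Fin Q.r → k)
    (i j : Fin Q.r) (n : ℕ) :
    Module.finrank k ((meshModule v j).W n i) = Module.finrank k ((meshModule w j).W n i) := by
  induction n using Nat.twoStepInduction generalizing i with
  | zero => rw [MeshModule.finrank_W_zero, MeshModule.finrank_W_zero]
  | one => rw [MeshModule.finrank_W_one, MeshModule.finrank_W_one]; rfl
  | more n ih0 ih1 =>
    have hv := ((meshModule v j).socleFree hconn hnd n).finrank_add i
    have hw := ((meshModule w j).socleFree hconn hnd n).finrank_add i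
    simp only [ih0, ih1] at hv
    omega

lemma finrank_corner_eq (hconn : Q.Connected) (hnd : ¬ Q.IsDynkin) (v w : Fin Q.r → k)
    (i j : Fin Q.r) (n : ℕ) :
    Module.finrank k (corner i j n : Submodule k (QHAlg k Q v)) =
      Module.finrank k (corner i j n : Submodule k (QHAlg k Q w)) := by
  induction n using Nat.twoStepInduction with
  | zero => rw [corner_zero, corner_zero, finrank_bot, finrank_bot]
  | one =>
    rw [finrank_corner, finrank_corner, corner_one_inf, corner_one_inf, finrank_bot, finrank_bot,
      finrank_W_eq hconn hnd v w]
  | more n ih _ =>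
    rw [finrank_corner_add_two hconn hnd, finrank_corner_add_two hconn hnd, ih,
      finrank_W_eq hconn hnd v w]

end QHAlg

/-- **The graded dimensions of the quiver Heisenberg algebra of a non-Dynkin
quiver do not depend on the parameter.**  For a connected finite acyclic
non-Dynkin quiver `Q` and any `v, w ∈ k^{Q₀}`, every graded piece is finite
dimensional and `dim_k e_i (ᵛΛ(Q)_n) e_j = dim_k e_i (ʷΛ(Q)_n) e_j` for all
`n ≥ 0` and all vertices `i, j`.  In particular the Hilbert series formula for
sincere `v` extends to arbitrary `v`. -/
theorem quiver_heisenberg_graded_dims_independent_of_parameter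
    (k : Type) [Field k] (Q : FinQuiver) (hr : 0 < Q.r)
    (hconn : Q.Connected) (hacyc : Q.Acyclic) (hnd : ¬ Q.IsDynkin)
    (v w : Fin Q.r → k) :
    (∀ (n : ℕ) (i j : Fin Q.r), FiniteDimensional k (qhCorner k Q v n i j)) ∧
    (∀ (n : ℕ) (i j : Fin Q.r),
      Module.finrank k (qhCorner k Q v n i j) =
        Module.finrank k (qhCorner k Q w n i j)) := by
  refine ⟨fun n i j => ?_, fun n i j => ?_⟩
  · rw [QHAlg.qhCorner_eq_corner]
    exact QHAlg.finite_corner i j (n + 1)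
  · rw [QHAlg.qhCorner_eq_corner, QHAlg.qhCorner_eq_corner]
    exact QHAlg.finrank_corner_eq hconn hnd v w i j (n + 1)
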